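/- Let μ, ν be Borel probability measures on ℝ with finite first moments and μ ≤_cd ν, define c(u) = sup_{k∈ℝ} (C_{μ_u}(k) − C_ν(k)) for u ∈ (0,1) with c(0) = 0, and set u* = sup{u ∈ (0,1) : c(u) = 0} (with sup ∅ = 0). Suppose u* < 1. Let S* be a shadow of μ_{u*} in ν, let μ' ∈ 𝓜 satisfy μ_{u*} + μ' = μ, and let ν' ∈ 𝓜 satisfy S* + ν' = ν. Then ℓ := inf(supp μ') is finite, ν'((ℓ,∞)) = 0, and μ'({ℓ}) = 0 or ν'({ℓ}) = 0; that is, the support of μ' lies strictly to the right of the support of ν'. -/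

import Mathlib

open MeasureTheory Set Filter

noncomputable section

/-- `η ∈ 𝓜`: a finite Borel measure on ℝ with finite first moment. -/
def MemM (η : MeasureTheory.Measure ℝ) : Prop :=
  MeasureTheory.IsFiniteMeasure η ∧ MeasureTheory.Integrable (fun x : ℝ => x) η

/-- Convex-decreasing order `≤_cd`. -/
def LeCD (η χ : MeasureTheory.Measure ℝ) : Prop :=
  ∀ f : ℝ → ℝ, ConvexOn ℝ Set.univ f → Antitone f →
    MeasureTheory.Integrable f η → MeasureTheory.Integrable f χ →
    ∫ x, f x ∂η ≤ ∫ x, f x ∂χ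

/-- Positive convex-decreasing order `≤_pcd`. -/
def LePCD (η χ : MeasureTheory.Measure ℝ) : Prop :=
  ∀ f : ℝ → ℝ, (∀ x, 0 ≤ f x) → ConvexOn ℝ Set.univ f → Antitone f →
    MeasureTheory.Integrable f η → MeasureTheory.Integrable f χ →
    ∫ x, f x ∂η ≤ ∫ x, f x ∂χ

/-- Positive convex order `≤_pc`. -/
def LePC (η χ : MeasureTheory.Measure ℝ) : Prop :=
  ∀ f : ℝ → ℝ, (∀ x, 0 ≤ f x) → ConvexOn ℝ Set.univ f →
    MeasureTheory.Integrable f η → MeasureTheory.Integrable f χ →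
    ∫ x, f x ∂η ≤ ∫ x, f x ∂χ

/-- A supermartingale coupling of `η` and `χ`. -/
def IsSupermartingaleCoupling (η χ : MeasureTheory.Measure ℝ)
    (π : MeasureTheory.Measure (ℝ × ℝ)) : Prop :=
  MeasureTheory.IsProbabilityMeasure π ∧
  π.map Prod.fst = η ∧ π.map Prod.snd = χ ∧
  MeasureTheory.Integrable (fun p : ℝ × ℝ => p.2) π ∧
  ∀ B : Set ℝ, MeasurableSet B →
    ∫ p in B ×ˢ (Set.univ : Set ℝ), (p : ℝ × ℝ).2 ∂π ≤ ∫ x in B, x ∂η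

/-- The potential function `P_η(k) = ∫ (k-x)⁺ η(dx)`. -/
def Ppot (η : MeasureTheory.Measure ℝ) (k : ℝ) : ℝ := ∫ x, max (k - x) 0 ∂η

/-- The potential function `C_η(k) = ∫ (x-k)⁺ η(dx)`. -/
def Cpot (η : MeasureTheory.Measure ℝ) (k : ℝ) : ℝ := ∫ x, max (x - k) 0 ∂η

/-- The left-continuous quantile function `G_η(u) = sup {k | η((-∞,k]) < u}`. -/
def quantile (η : MeasureTheory.Measure ℝ) (u : ℝ) : ℝ :=
  sSup {k : ℝ | (η (Set.Iic k)).toReal < u}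

/-- The lift `μ_u = μ|_{(-∞,G(u))} + (u - μ((-∞,G(u)))) δ_{G(u)}`, with `μ_0 = 0`, `μ_1 = μ`. -/
def muU (μ : MeasureTheory.Measure ℝ) (u : ℝ) : MeasureTheory.Measure ℝ :=
  if u ≤ 0 then 0
  else if 1 ≤ u then μ
  else μ.restrict (Set.Iio (quantile μ u)) +
    (ENNReal.ofReal (u - (μ (Set.Iio (quantile μ u))).toReal)) •
      MeasureTheory.Measure.dirac (quantile μ u)

/-- `S` is a shadow of `μ` in `ν`. -/
def IsShadow (μ ν S : MeasureTheory.Measure ℝ) : Prop :=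
  MemM S ∧ LeCD μ S ∧ (∀ A : Set ℝ, MeasurableSet A → S A ≤ ν A) ∧
  ∀ η : MeasureTheory.Measure ℝ, MemM η → LeCD μ η →
    (∀ A : Set ℝ, MeasurableSet A → η A ≤ ν A) → LeCD S η

/-- `h` is the convex hull of `f`. -/
def IsConvexHullFn (f h : ℝ → ℝ) : Prop :=
  ConvexOn ℝ Set.univ h ∧ (∀ x, h x ≤ f x) ∧
  ∀ g : ℝ → ℝ, ConvexOn ℝ Set.univ g → (∀ x, g x ≤ f x) → ∀ x, g x ≤ h x

/-- The class `𝒟(a,b)`. -/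
def MemD (a b : ℝ) (f : ℝ → ℝ) : Prop :=
  (∀ x, 0 ≤ f x) ∧ Monotone f ∧ ConvexOn ℝ Set.univ f ∧
  Filter.Tendsto f Filter.atBot (nhds 0) ∧
  Filter.Tendsto (fun z => f z - (a * z - b)) Filter.atTop (nhds 0)

/-- The topological support of a measure. -/
def msupport (η : MeasureTheory.Measure ℝ) : Set ℝ :=
  {x : ℝ | ∀ U ∈ nhds x, η U ≠ 0}

/-!
Minimality of the shadow `S` of `μ_u` in `ν` gives `C_{μ_u} ≤ C_S` as soon as `C_{μ_u} ≤ C_ν`: it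
suffices to find `χ ≤ ν` with `μ_u ≤_cd χ` and the same mean as `μ_u`, for then the mean of `S` is
that of `μ_u` and the inequality of the potentials `P` passes to the potentials `C`. Such a `χ` is
`ν` with a window of quantile levels of length `1 - u` removed. As the window slides, the mean of
`χ` varies continuously and takes the value required; that `P_{μ_u} ≤ P_χ` is read off the
integrated quantile functions, which are the Legendre transforms of the potentials.

Now let `u = u*`, and suppose that `μ'` charges `(-∞, y]` and `ν'` charges `[y, ∞)`. For `v > u`
close to `u`, passing from `μ_u` to `μ_v` adds mass `v - u ≤ ν'[y, ∞)` to the left of `y`, so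
`C_{μ_v} ≤ C_{μ_u} + (v - u) (y - ·)⁺ ≤ C_S + C_{ν'} = C_ν`, contradicting the maximality of `u*`.
-/

section Potentials

variable {η χ : Measure ℝ} [IsFiniteMeasure η]

theorem integrable_max_const_sub (hη : Integrable (fun x : ℝ => x) η) (k : ℝ) :
    Integrable (fun x => max (k - x) 0) η :=
  ((integrable_const k).sub hη).pos_part

theorem integrable_max_sub_const (hη : Integrable (fun x : ℝ => x) η) (k : ℝ) :
    Integrable (fun x => max (x - k) 0) η :=
  (hη.sub (integrable_const k)).pos_part

theorem Ppot_mono_measure {η χ : Measure ℝ} [IsFiniteMeasure χ]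
    (hχ : Integrable (fun x : ℝ => x) χ) (h : η ≤ χ) (k : ℝ) : Ppot η k ≤ Ppot χ k :=
  integral_mono_measure h (Eventually.of_forall fun _ => le_max_right _ _)
    (integrable_max_const_sub hχ k)

theorem Cpot_nonneg (η : Measure ℝ) (k : ℝ) : 0 ≤ Cpot η k :=
  integral_nonneg fun _ => le_max_right _ _

theorem Cpot_eq_Ppot_add (hη : Integrable (fun x : ℝ => x) η) (k : ℝ) :
    Cpot η k = Ppot η k + ∫ x, x ∂η - k * η.real univ := by
  have payoff_parity (x : ℝ) : max (x - k) 0 = max (k - x) 0 + (x - k) := by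
    rw [← max_add_add_right, sub_add_sub_cancel, sub_self, zero_add, max_comm]
  have hsub : Integrable (fun x => x - k) η := hη.sub (integrable_const k)
  simp only [Cpot, Ppot, payoff_parity]
  rw [integral_add (integrable_max_const_sub hη k) hsub,
    integral_sub hη (integrable_const k), integral_const, smul_eq_mul]
  ring

theorem Cpot_add_measure [IsFiniteMeasure χ] (hη : Integrable (fun x : ℝ => x) η)
    (hχ : Integrable (fun x : ℝ => x) χ) (k : ℝ) : Cpot (η + χ) k = Cpot η k + Cpot χ k :=
  integral_add_measure (integrable_max_sub_const hη k) (integrable_max_sub_const hχ k)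

theorem measureReal_Ici_mul_le_Cpot (hη : Integrable (fun x : ℝ => x) η) (y k : ℝ) :
    η.real (Ici y) * max (y - k) 0 ≤ Cpot η k := by
  calc η.real (Ici y) * max (y - k) 0 = ∫ _ in Ici y, max (y - k) 0 ∂η := by simp
    _ ≤ ∫ x in Ici y, max (x - k) 0 ∂η :=
        setIntegral_mono_on (integrable_const _).integrableOn
          (integrable_max_sub_const hη k).integrableOn measurableSet_Ici
          fun x hx => max_le_max_right _ (sub_le_sub_right hx _)
    _ ≤ Cpot η k := setIntegral_le_integral (integrable_max_sub_const hη k)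
        (Eventually.of_forall fun _ => le_max_right _ _)

theorem abs_Cpot_sub_le (hη : Integrable (fun x : ℝ => x) η) (k : ℝ) :
    |Cpot η k - η.real univ * max (-k) 0| ≤ ∫ x, |x| ∂η := by
  have hconst : η.real univ * max (-k) 0 = ∫ _, max (-k) 0 ∂η := by simp
  rw [Cpot, hconst, ← integral_sub (integrable_max_sub_const hη k) (integrable_const _)]
  refine abs_integral_le_integral_abs.trans (integral_mono_of_nonneg
    (Eventually.of_forall fun _ => abs_nonneg _) hη.abs (Eventually.of_forall fun x => ?_))
  simpa using abs_max_sub_max_le_abs (x - k) (-k) 0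

theorem tendsto_Cpot_atTop (hη : Integrable (fun x : ℝ => x) η) :
    Tendsto (Cpot η) atTop (nhds 0) := by
  rw [← integral_zero ℝ ℝ (μ := η)]
  refine tendsto_integral_filter_of_dominated_convergence (fun x => |x|)
    (Eventually.of_forall fun k => (integrable_max_sub_const hη k).aestronglyMeasurable) ?_
    hη.abs (Eventually.of_forall fun x => ?_)
  · filter_upwards [eventually_ge_atTop 0] with k hk
    refine Eventually.of_forall fun x => ?_
    rw [Real.norm_of_nonneg (le_max_right _ _)]
    exact max_le (by linarith [le_abs_self x]) (abs_nonneg x)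
  · refine tendsto_const_nhds.congr' ?_
    filter_upwards [eventually_ge_atTop x] with k hk
    exact (max_eq_right (sub_nonpos.2 hk)).symm

theorem iSup_Cpot_sub_eq_zero_iff [IsFiniteMeasure χ] (hη : Integrable (fun x : ℝ => x) η)
    (hχ : Integrable (fun x : ℝ => x) χ) (hmass : η.real univ ≤ χ.real univ) :
    ⨆ k, (Cpot η k - Cpot χ k) = 0 ↔ ∀ k, Cpot η k ≤ Cpot χ k := by
  have hbdd : BddAbove (range fun k => Cpot η k - Cpot χ k) := by
    refine ⟨(∫ x, |x| ∂η) + ∫ x, |x| ∂χ, forall_mem_range.2 fun k => ?_⟩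
    have hη_le := (abs_le.1 (abs_Cpot_sub_le hη k)).2
    have hχ_ge := (abs_le.1 (abs_Cpot_sub_le hχ k)).1
    have hmass_mul := mul_le_mul_of_nonneg_right hmass (le_max_right (-k) 0)
    linarith
  refine ⟨fun h k => sub_nonpos.1 (h ▸ le_ciSup hbdd k), fun h => ?_⟩
  refine le_antisymm (ciSup_le fun k => sub_nonpos.2 (h k)) ?_
  have htendsto : Tendsto (fun k => Cpot η k - Cpot χ k) atTop (nhds 0) := by
    simpa using (tendsto_Cpot_atTop hη).sub (tendsto_Cpot_atTop hχ)
  exact le_of_tendsto htendsto (Eventually.of_forall (le_ciSup hbdd))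

end Potentials

namespace LeCD

variable {η χ : Measure ℝ}

theorem integral_le (h : LeCD η χ) (hη : Integrable (fun x : ℝ => x) η)
    (hχ : Integrable (fun x : ℝ => x) χ) : ∫ x, x ∂χ ≤ ∫ x, x ∂η := by
  have hneg := h (fun x => -x) (concaveOn_id convex_univ).neg (fun _ _ hab => neg_le_neg hab)
    hη.neg hχ.neg
  rwa [integral_neg, integral_neg, neg_le_neg_iff] at hneg

variable [IsFiniteMeasure η] [IsFiniteMeasure χ]

theorem Ppot_le (h : LeCD η χ) (hη : Integrable (fun x : ℝ => x) η)
    (hχ : Integrable (fun x : ℝ => x) χ) (k : ℝ) : Ppot η k ≤ Ppot χ k :=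
  h _ (((convexOn_const k convex_univ).sub (concaveOn_id convex_univ)).sup
      (convexOn_const 0 convex_univ))
    (fun _ _ hab => max_le_max_right _ (sub_le_sub_left hab _))
    (integrable_max_const_sub hη k) (integrable_max_const_sub hχ k)

theorem measureReal_univ_eq (h : LeCD η χ) : η.real univ = χ.real univ := by
  have hone := h (fun _ => 1) (convexOn_const _ convex_univ) antitone_const
    (integrable_const _) (integrable_const _)
  have hneg := h (fun _ => -1) (convexOn_const _ convex_univ) antitone_const
    (integrable_const _) (integrable_const _)
  simp only [integral_const, smul_eq_mul] at hone hneg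
  linarith

end LeCD

section CarrMadan

/-- The payoff at `x` of the out-of-the-money option with strike `k` when the forward is at `a`: a
put for `k ≤ a`, a call for `a < k`. Up to an affine function, convex functions are mixtures of
such payoffs (the Carr–Madan formula). -/
def outOfMoneyPayoff (a k x : ℝ) : ENNReal :=
  if k ≤ a then ENNReal.ofReal (k - x) else ENNReal.ofReal (x - k)

theorem measurable_outOfMoneyPayoff (a : ℝ) :
    Measurable fun p : ℝ × ℝ => outOfMoneyPayoff a p.1 p.2 :=
  Measurable.ite (measurableSet_le measurable_fst measurable_const)
    (measurable_fst.sub measurable_snd).ennreal_ofReal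
    (measurable_snd.sub measurable_fst).ennreal_ofReal

theorem exists_stieltjesFunction_integral_eq_sub {f : ℝ → ℝ} (hf : ConvexOn ℝ univ f) :
    ∃ F : StieltjesFunction ℝ, ∀ a b, ∫ t in a..b, F t = f b - f a := by
  have hmono : Monotone fun t => derivWithin f (Ioi t) t := by
    simpa only [interior_univ, monotoneOn_univ] using hf.monotoneOn_rightDeriv
  refine ⟨hmono.stieltjesFunction, fun a b => ?_⟩
  have hae : ∀ᵐ t, hmono.stieltjesFunction t = derivWithin f (Ioi t) t := by
    filter_upwards [hmono.countable_not_continuousAt.ae_notMem volume] with t ht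
    rw [hmono.stieltjesFunction_eq]
    exact hmono.continuousWithinAt_Ioi_iff_rightLim_eq.1 (not_not.1 ht).continuousWithinAt
  rw [intervalIntegral.integral_congr_ae (hae.mono fun _ h _ => h)]
  refine intervalIntegral.integral_eq_sub_of_hasDeriv_right
    ((hf.continuousOn isOpen_univ).mono (subset_univ _)) (fun t _ => ?_) hmono.intervalIntegrable
  exact hf.hasDerivWithinAt_rightDeriv_of_mem_interior (by simp)

variable (F : StieltjesFunction ℝ) {a x : ℝ}

theorem lintegral_outOfMoneyPayoff_of_le (hxa : x ≤ a) :
    ∫⁻ k, outOfMoneyPayoff a k x ∂F.measure = ∫⁻ t in Ioc x a, ENNReal.ofReal (F a - F t) := by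
  let E : Set (ℝ × ℝ) := {p | x < p.1 ∧ p.1 < p.2 ∧ p.2 ≤ a}
  have hE : MeasurableSet E := by measurability
  have hfst (t : ℝ) :
      F.measure (Prod.mk t ⁻¹' E)
        = (Ioc x a).indicator (fun t => ENNReal.ofReal (F a - F t)) t := by
    by_cases ht : t ∈ Ioc x a
    · rw [indicator_of_mem ht, ← F.measure_Ioc]
      congr 1 with k
      simp [E, ht.1]
    · rw [indicator_of_notMem ht]
      convert measure_empty (μ := F.measure)
      ext k
      simp only [mem_preimage, E, mem_ofPred_eq, mem_empty_iff_false, iff_false]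
      exact fun h => ht ⟨h.1, h.2.1.le.trans h.2.2⟩
  have hsnd (k : ℝ) : volume ((fun t => (t, k)) ⁻¹' E) = outOfMoneyPayoff a k x := by
    rw [outOfMoneyPayoff]
    split_ifs with hk
    · rw [← Real.volume_Ioo]
      congr 1 with t
      simp [E, hk]
    · rw [ENNReal.ofReal_of_nonpos (by linarith)]
      convert measure_empty (μ := (volume : Measure ℝ))
      ext t
      simp [E, hk]
  calc ∫⁻ k, outOfMoneyPayoff a k x ∂F.measure = (volume.prod F.measure) E := by
        rw [Measure.prod_apply_symm hE]; exact lintegral_congr fun k => (hsnd k).symm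
    _ = ∫⁻ t in Ioc x a, ENNReal.ofReal (F a - F t) := by
        rw [Measure.prod_apply hE, ← lintegral_indicator measurableSet_Ioc]
        exact lintegral_congr hfst

theorem lintegral_outOfMoneyPayoff_of_ge (hax : a ≤ x) :
    ∫⁻ k, outOfMoneyPayoff a k x ∂F.measure = ∫⁻ t in Ioc a x, ENNReal.ofReal (F t - F a) := by
  let E : Set (ℝ × ℝ) := {p | a < p.2 ∧ p.2 ≤ p.1 ∧ p.1 ≤ x}
  have hE : MeasurableSet E := by measurability
  have hfst (t : ℝ) :
      F.measure (Prod.mk t ⁻¹' E)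
        = (Ioc a x).indicator (fun t => ENNReal.ofReal (F t - F a)) t := by
    by_cases ht : t ∈ Ioc a x
    · rw [indicator_of_mem ht, ← F.measure_Ioc]
      congr 1 with k
      simp [E, ht.2]
    · rw [indicator_of_notMem ht]
      convert measure_empty (μ := F.measure)
      ext k
      simp only [mem_preimage, E, mem_ofPred_eq, mem_empty_iff_false, iff_false]
      exact fun h => ht ⟨h.1.trans_le h.2.1, h.2.2⟩
  have hsnd (k : ℝ) : volume ((fun t => (t, k)) ⁻¹' E) = outOfMoneyPayoff a k x := by
    rw [outOfMoneyPayoff]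
    split_ifs with hk
    · rw [ENNReal.ofReal_of_nonpos (by linarith)]
      convert measure_empty (μ := (volume : Measure ℝ))
      ext t
      simp [E, hk]
    · rw [← Real.volume_Icc]
      congr 1 with t
      simp [E, not_le.1 hk]
  calc ∫⁻ k, outOfMoneyPayoff a k x ∂F.measure = (volume.prod F.measure) E := by
        rw [Measure.prod_apply_symm hE]; exact lintegral_congr fun k => (hsnd k).symm
    _ = ∫⁻ t in Ioc a x, ENNReal.ofReal (F t - F a) := by
        rw [Measure.prod_apply hE, ← lintegral_indicator measurableSet_Ioc]
        exact lintegral_congr hfst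

theorem exists_affine_add_lintegral_outOfMoneyPayoff {f : ℝ → ℝ} (hf : ConvexOn ℝ univ f) (a : ℝ) :
    ∃ (c : ℝ) (m : Measure ℝ), SFinite m ∧ ∀ x, f a + c * (x - a) ≤ f x ∧
      ENNReal.ofReal (f x - (f a + c * (x - a))) = ∫⁻ k, outOfMoneyPayoff a k x ∂m := by
  obtain ⟨F, hF⟩ := exists_stieltjesFunction_integral_eq_sub hf
  have hF_int (b d : ℝ) : IntervalIntegrable F volume b d := F.mono.intervalIntegrable
  have hremainder (x : ℝ) : ∫ t in a..x, (F t - F a) = f x - (f a + F a * (x - a)) := by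
    rw [intervalIntegral.integral_sub (hF_int a x) intervalIntegrable_const, hF,
      intervalIntegral.integral_const, smul_eq_mul]
    ring
  refine ⟨F a, F.measure, inferInstance, fun x => ?_⟩
  rw [← sub_nonneg, ← hremainder]
  obtain hxa | hax := le_total x a
  · have hnonneg : ∀ t ∈ Ioc x a, 0 ≤ F a - F t := fun t ht => sub_nonneg.2 (F.mono ht.2)
    have hflip : ∫ t in a..x, (F t - F a) = ∫ t in Ioc x a, (F a - F t) := by
      rw [intervalIntegral.integral_symm, ← intervalIntegral.integral_neg,
        intervalIntegral.integral_of_le hxa]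
      simp only [neg_sub]
    rw [hflip, lintegral_outOfMoneyPayoff_of_le F hxa]
    exact ⟨setIntegral_nonneg measurableSet_Ioc hnonneg, ofReal_integral_eq_lintegral_ofReal
      (intervalIntegrable_const.sub (hF_int x a)).1
      ((ae_restrict_iff' measurableSet_Ioc).2 (Eventually.of_forall hnonneg))⟩
  · have hnonneg : ∀ t ∈ Ioc a x, 0 ≤ F t - F a := fun t ht => sub_nonneg.2 (F.mono ht.1.le)
    rw [intervalIntegral.integral_of_le hax, lintegral_outOfMoneyPayoff_of_ge F hax]
    exact ⟨setIntegral_nonneg measurableSet_Ioc hnonneg, ofReal_integral_eq_lintegral_ofReal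
      ((hF_int a x).sub intervalIntegrable_const).1
      ((ae_restrict_iff' measurableSet_Ioc).2 (Eventually.of_forall hnonneg))⟩

theorem lintegral_outOfMoneyPayoff {η : Measure ℝ} [IsFiniteMeasure η]
    (hη : Integrable (fun x : ℝ => x) η) (a k : ℝ) :
    ∫⁻ x, outOfMoneyPayoff a k x ∂η
      = if k ≤ a then ENNReal.ofReal (Ppot η k) else ENNReal.ofReal (Cpot η k) := by
  unfold outOfMoneyPayoff
  split_ifs
  · rw [Ppot, ofReal_integral_eq_lintegral_ofReal (integrable_max_const_sub hη k)
      (Eventually.of_forall fun _ => le_max_right _ _)]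
    simp
  · rw [Cpot, ofReal_integral_eq_lintegral_ofReal (integrable_max_sub_const hη k)
      (Eventually.of_forall fun _ => le_max_right _ _)]
    simp

theorem exists_ofReal_integral_sub_eq_lintegral_potentials {f : ℝ → ℝ} (hf : ConvexOn ℝ univ f)
    (a : ℝ) :
    ∃ (c : ℝ) (m : Measure ℝ), ∀ (η : Measure ℝ) [IsFiniteMeasure η],
      Integrable (fun x : ℝ => x) η → Integrable f η →
        η.real univ * (f a - c * a) + c * ∫ x, x ∂η ≤ ∫ x, f x ∂η ∧
        ENNReal.ofReal (∫ x, f x ∂η - (η.real univ * (f a - c * a) + c * ∫ x, x ∂η))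
          = ∫⁻ k, if k ≤ a then ENNReal.ofReal (Ppot η k) else ENNReal.ofReal (Cpot η k) ∂m := by
  obtain ⟨c, m, _, hcm⟩ := exists_affine_add_lintegral_outOfMoneyPayoff hf a
  refine ⟨c, m, fun η _ hη hfη => ?_⟩
  have haffine : Integrable (fun x => f a + c * (x - a)) η :=
    (integrable_const _).add ((hη.sub (integrable_const a)).const_mul c)
  have hremainder_int : Integrable (fun x => f x - (f a + c * (x - a))) η := hfη.sub haffine
  have haffine_integral : ∫ x, (f a + c * (x - a)) ∂η
      = η.real univ * (f a - c * a) + c * ∫ x, x ∂η := by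
    have hregroup (x : ℝ) : f a + c * (x - a) = (f a - c * a) + c * x := by ring
    simp only [hregroup]
    rw [integral_add (integrable_const _) (hη.const_mul c), integral_const, integral_const_mul,
      smul_eq_mul]
  rw [← haffine_integral, ← integral_sub hfη haffine]
  refine ⟨integral_mono haffine hfη fun x => (hcm x).1, ?_⟩
  rw [ofReal_integral_eq_lintegral_ofReal hremainder_int
    (Eventually.of_forall fun x => sub_nonneg.2 (hcm x).1)]
  simp only [(hcm _).2, ← lintegral_outOfMoneyPayoff hη]
  exact (lintegral_lintegral_swap (measurable_outOfMoneyPayoff a).aemeasurable).symm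

theorem integral_convex_le_of_Ppot_le {η χ : Measure ℝ} [IsFiniteMeasure η] [IsFiniteMeasure χ]
    (hη : Integrable (fun x : ℝ => x) η) (hχ : Integrable (fun x : ℝ => x) χ)
    (hmass : η.real univ = χ.real univ) (hmean : ∫ x, x ∂η = ∫ x, x ∂χ)
    (hP : ∀ k, Ppot η k ≤ Ppot χ k) {f : ℝ → ℝ} (hf : ConvexOn ℝ univ f)
    (hfη : Integrable f η) (hfχ : Integrable f χ) : ∫ x, f x ∂η ≤ ∫ x, f x ∂χ := by
  obtain ⟨c, m, hcm⟩ := exists_ofReal_integral_sub_eq_lintegral_potentials hf 0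
  obtain ⟨-, hη_eq⟩ := hcm η hη hfη
  obtain ⟨hχ_le, hχ_eq⟩ := hcm χ hχ hfχ
  have hC (k : ℝ) : Cpot η k ≤ Cpot χ k := by
    rw [Cpot_eq_Ppot_add hη, Cpot_eq_Ppot_add hχ, hmass, hmean]
    linarith [hP k]
  rw [hmass, hmean] at hη_eq
  rw [← sub_le_sub_iff_right, ← ENNReal.ofReal_le_ofReal_iff (sub_nonneg.2 hχ_le), hη_eq, hχ_eq]
  refine lintegral_mono fun k => ?_
  dsimp only
  split_ifs
  exacts [ENNReal.ofReal_le_ofReal (hP k), ENNReal.ofReal_le_ofReal (hC k)]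

end CarrMadan

section QuantileTransform

open ProbabilityTheory

variable {μ : Measure ℝ} [IsProbabilityMeasure μ]

theorem quantile_le_iff {t : ℝ} (ht : t ∈ Ioo (0 : ℝ) 1) {x : ℝ} :
    quantile μ t ≤ x ↔ t ≤ cdf μ x := by
  have hset : {k : ℝ | (μ (Iic k)).toReal < t} = {k | cdf μ k < t} := by
    ext k; rw [mem_ofPred_eq, mem_ofPred_eq, cdf_eq_real, measureReal_def]
  have hne : {k | cdf μ k < t}.Nonempty := ((tendsto_cdf_atBot μ).eventually_lt_const ht.1).exists
  obtain ⟨b, hb⟩ := ((tendsto_cdf_atTop μ).eventually_const_lt ht.2).exists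
  have hbdd : BddAbove {k | cdf μ k < t} :=
    ⟨b, fun k hk => ((monotone_cdf μ).reflect_lt (lt_trans hk hb)).le⟩
  rw [quantile, hset]
  refine ⟨fun hx => ?_, fun hx => csSup_le hne fun k hk =>
    ((monotone_cdf μ).reflect_lt (lt_of_lt_of_le hk hx)).le⟩
  by_contra! hlt
  have hright : ∀ᶠ y in nhdsWithin x (Ioi x), cdf μ y < t :=
    (((cdf μ).right_continuous x).mono Ioi_subset_Ici_self).tendsto.eventually_lt_const hlt
  obtain ⟨y, hy, hxy⟩ := (hright.and self_mem_nhdsWithin).exists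
  exact ((le_csSup hbdd hy).trans hx).not_gt hxy

theorem monotoneOn_quantile : MonotoneOn (quantile μ) (Ioo 0 1) := fun _ hs _ ht hst =>
  (quantile_le_iff hs).2 (hst.trans ((quantile_le_iff ht).1 le_rfl))

/-- The part of `μ` carried by the quantile levels in `A`: the image of Lebesgue measure on `A`
under the quantile function of `μ`. -/
def quantilePart (μ : Measure ℝ) (A : Set ℝ) : Measure ℝ :=
  (volume.restrict A).map (quantile μ)

variable {A B : Set ℝ}

theorem aemeasurable_quantile (hA : A ⊆ Ioo 0 1) :
    AEMeasurable (quantile μ) (volume.restrict A) :=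
  (aemeasurable_restrict_of_monotoneOn measurableSet_Ioo monotoneOn_quantile).mono_measure
    (Measure.restrict_mono_set _ hA)

theorem quantilePart_Ioo_Iic {u : ℝ} (hu : u ≤ 1) (x : ℝ) :
    quantilePart μ (Ioo 0 u) (Iic x) = ENNReal.ofReal (min u (cdf μ x)) := by
  have hsub : Ioo 0 u ⊆ Ioo (0 : ℝ) 1 := Ioo_subset_Ioo_right hu
  rw [quantilePart, Measure.map_apply_of_aemeasurable (aemeasurable_quantile hsub)
    measurableSet_Iic, Measure.restrict_apply' measurableSet_Ioo,
    ← sub_zero (min u (cdf μ x)), ← Real.volume_Ioc]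
  refine measure_congr ?_
  have hset : quantile μ ⁻¹' Iic x ∩ Ioo 0 u = Ioo 0 u ∩ Iic (cdf μ x) := by
    rw [inter_comm]
    ext t
    exact and_congr_right fun ht => quantile_le_iff (hsub ht)
  rw [hset, ← Ioc_inter_Iic]
  exact Ioo_ae_eq_Ioc.inter .rfl

theorem quantilePart_Ioo_zero_one : quantilePart μ (Ioo 0 1) = μ := by
  have : IsFiniteMeasure (quantilePart μ (Ioo 0 1)) := Measure.isFiniteMeasure_map _ _
  refine Measure.ext_of_Iic _ _ fun x => ?_
  rw [quantilePart_Ioo_Iic le_rfl, min_eq_right (cdf_le_one μ x), ofReal_cdf]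

theorem quantilePart_mono (hAB : A ⊆ B) (hB : B ⊆ Ioo 0 1) :
    quantilePart μ A ≤ quantilePart μ B :=
  Measure.map_mono_of_aemeasurable (Measure.restrict_mono_set _ hAB) (aemeasurable_quantile hB)

theorem quantilePart_le (hA : A ⊆ Ioo 0 1) : quantilePart μ A ≤ μ :=
  (quantilePart_mono hA Subset.rfl).trans_eq quantilePart_Ioo_zero_one

theorem integral_quantilePart (hA : A ⊆ Ioo 0 1) {f : ℝ → ℝ} (hf : Measurable f) :
    ∫ x, f x ∂quantilePart μ A = ∫ t in A, f (quantile μ t) :=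
  integral_map (aemeasurable_quantile hA) hf.aestronglyMeasurable

theorem integrableOn_comp_quantile (hA : A ⊆ Ioo 0 1) {f : ℝ → ℝ} (hf : Measurable f)
    (hint : Integrable f μ) : IntegrableOn (fun t => f (quantile μ t)) A :=
  (integrable_map_measure hf.aestronglyMeasurable (aemeasurable_quantile hA)).1
    (hint.mono_measure (quantilePart_le hA))

theorem quantilePart_real_univ (hA : A ⊆ Ioo 0 1) :
    (quantilePart μ A).real univ = volume.real A := by
  rw [measureReal_def, quantilePart, Measure.map_apply_of_aemeasurable (aemeasurable_quantile hA)
    MeasurableSet.univ, preimage_univ, Measure.restrict_apply_univ, measureReal_def]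

theorem measureReal_Iio_quantile_le {u : ℝ} (hu : u ∈ Ioo (0 : ℝ) 1) :
    μ.real (Iio (quantile μ u)) ≤ u := by
  rw [measureReal_def]
  nth_rw 1 [← quantilePart_Ioo_zero_one (μ := μ)]
  rw [quantilePart, Measure.map_apply_of_aemeasurable (aemeasurable_quantile Subset.rfl)
    measurableSet_Iio, Measure.restrict_apply' measurableSet_Ioo]
  have hsub : quantile μ ⁻¹' Iio (quantile μ u) ∩ Ioo 0 1 ⊆ Ioo 0 u := fun t ht =>
    ⟨ht.2.1, monotoneOn_quantile.reflect_lt ht.2 hu ht.1⟩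
  exact ENNReal.toReal_le_of_le_ofReal hu.1.le
    ((measure_mono hsub).trans_eq (by rw [Real.volume_Ioo, sub_zero]))

theorem muU_one (μ : Measure ℝ) : muU μ 1 = μ := by
  simp [muU]

theorem muU_eq_quantilePart {u : ℝ} (hu : u ∈ Icc (0 : ℝ) 1) :
    muU μ u = quantilePart μ (Ioo 0 u) := by
  obtain rfl | hu0 := hu.1.eq_or_lt
  · simp [muU, quantilePart]
  obtain rfl | hu1 := hu.2.eq_or_lt
  · rw [quantilePart_Ioo_zero_one, muU_one]
  rw [muU, if_neg hu0.not_ge, if_neg hu1.not_ge, ← measureReal_def]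
  have : IsFiniteMeasure (quantilePart μ (Ioo 0 u)) := Measure.isFiniteMeasure_map _ _
  refine (Measure.ext_of_Iic _ _ fun x => ?_).symm
  rw [quantilePart_Ioo_Iic hu.2, Measure.add_apply, Measure.restrict_apply measurableSet_Iic,
    Measure.smul_apply, Measure.dirac_apply' _ measurableSet_Iic, smul_eq_mul]
  obtain hx | hx := lt_or_ge x (quantile μ u)
  · have hcdf : cdf μ x ≤ u := (not_le.1 fun h => hx.not_ge ((quantile_le_iff ⟨hu0, hu1⟩).2 h)).le
    rw [min_eq_right hcdf, ofReal_cdf, inter_eq_left.2 (Iic_subset_Iio.2 hx),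
      indicator_of_notMem (notMem_Iic.2 hx), mul_zero, add_zero]
  · have hcdf : u ≤ cdf μ x := (quantile_le_iff ⟨hu0, hu1⟩).1 hx
    rw [min_eq_left hcdf, inter_eq_right.2 (Iio_subset_Iic hx), indicator_of_mem (mem_Iic.2 hx),
      Pi.one_apply, mul_one, ← ofReal_measureReal, ← ENNReal.ofReal_add measureReal_nonneg
        (sub_nonneg.2 (measureReal_Iio_quantile_le ⟨hu0, hu1⟩)), add_sub_cancel]

theorem muU_le {u : ℝ} (hu : u ∈ Icc (0 : ℝ) 1) : muU μ u ≤ μ :=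
  (muU_eq_quantilePart hu).trans_le (quantilePart_le (Ioo_subset_Ioo_right hu.2))

theorem muU_real_univ {u : ℝ} (hu : u ∈ Icc (0 : ℝ) 1) : (muU μ u).real univ = u := by
  rw [muU_eq_quantilePart hu, quantilePart_real_univ (Ioo_subset_Ioo_right hu.2),
    Real.volume_real_Ioo_of_le hu.1, sub_zero]

theorem muU_real_Iic {u : ℝ} (hu : u ∈ Icc (0 : ℝ) 1) (x : ℝ) :
    (muU μ u).real (Iic x) = min u (cdf μ x) := by
  rw [measureReal_def, muU_eq_quantilePart hu, quantilePart_Ioo_Iic hu.2,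
    ENNReal.toReal_ofReal (le_min hu.1 (cdf_nonneg μ x))]

end QuantileTransform

/-- The integrated quantile function `t ↦ ∫₀ᵗ G_μ`. For `0 ≤ u ≤ 1` the potential
`k ↦ P_{μ_u}(k)` is the Legendre transform of its restriction to `[0, u]`. -/
def integratedQuantile (μ : Measure ℝ) (t : ℝ) : ℝ :=
  ∫ τ in (0 : ℝ)..t, quantile μ τ

section IntegratedQuantile

open ProbabilityTheory

variable {μ : Measure ℝ} [IsProbabilityMeasure μ] {A B : Set ℝ} {t u : ℝ}

theorem integratedQuantile_zero (μ : Measure ℝ) : integratedQuantile μ 0 = 0 :=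
  intervalIntegral.integral_same

theorem intervalIntegrable_quantile (hμ : Integrable (fun x : ℝ => x) μ) {a b : ℝ}
    (ha : a ∈ Icc (0 : ℝ) 1) (hb : b ∈ Icc (0 : ℝ) 1) :
    IntervalIntegrable (quantile μ) volume a b := by
  have hunit : IntervalIntegrable (quantile μ) volume 0 1 :=
    (intervalIntegrable_iff_integrableOn_Ioo_of_le zero_le_one).2
      (integrableOn_comp_quantile Subset.rfl measurable_id hμ)
  refine hunit.mono_set ?_
  rw [uIcc_of_le zero_le_one]
  exact uIcc_subset_Icc ha hb

theorem continuousOn_integratedQuantile (hμ : Integrable (fun x : ℝ => x) μ) :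
    ContinuousOn (integratedQuantile μ) (Icc 0 1) := by
  have hint := (intervalIntegrable_quantile hμ (left_mem_Icc.2 zero_le_one)
    (right_mem_Icc.2 zero_le_one)).1
  rw [← integrableOn_Icc_iff_integrableOn_Ioc, ← uIcc_of_le zero_le_one] at hint
  exact uIcc_of_le (zero_le_one' ℝ) ▸ intervalIntegral.continuousOn_primitive_interval hint

theorem setIntegral_Ioo_const_sub_quantile (hμ : Integrable (fun x : ℝ => x) μ) {a b : ℝ}
    (ha : 0 ≤ a) (hab : a ≤ b) (hb : b ≤ 1) (k : ℝ) :
    ∫ τ in Ioo a b, (k - quantile μ τ)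
      = (b - a) * k - (integratedQuantile μ b - integratedQuantile μ a) := by
  have h0 : (0 : ℝ) ∈ Icc (0 : ℝ) 1 := left_mem_Icc.2 zero_le_one
  have ha' : a ∈ Icc (0 : ℝ) 1 := ⟨ha, hab.trans hb⟩
  have hb' : b ∈ Icc (0 : ℝ) 1 := ⟨ha.trans hab, hb⟩
  rw [← integral_Ioc_eq_integral_Ioo, ← intervalIntegral.integral_of_le hab,
    intervalIntegral.integral_sub intervalIntegrable_const (intervalIntegrable_quantile hμ ha' hb'),
    intervalIntegral.integral_const, smul_eq_mul, integratedQuantile, integratedQuantile,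
    intervalIntegral.integral_interval_sub_left (intervalIntegrable_quantile hμ h0 hb')
      (intervalIntegrable_quantile hμ h0 ha')]

theorem setIntegral_Ioo_union_Ioo_const_sub_quantile (hμ : Integrable (fun x : ℝ => x) μ)
    {s a b : ℝ} (hs : 0 ≤ s) (hsa : s ≤ a) (hab : a ≤ b) (hb : b ≤ 1) (k : ℝ) :
    ∫ τ in Ioo 0 s ∪ Ioo a b, (k - quantile μ τ) = (s + b - a) * k
      - (integratedQuantile μ s + integratedQuantile μ b - integratedQuantile μ a) := by
  have hint {c d : ℝ} (hc : 0 ≤ c) (hd : d ≤ 1) :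
      IntegrableOn (fun τ => k - quantile μ τ) (Ioo c d) :=
    integrableOn_comp_quantile (Ioo_subset_Ioo hc hd) (measurable_const.sub measurable_id)
      ((integrable_const k).sub hμ)
  have hdisj : Disjoint (Ioo 0 s) (Ioo a b) :=
    disjoint_left.2 fun τ hτ hτ' => (hτ.2.trans_le hsa).not_gt hτ'.1
  rw [setIntegral_union hdisj measurableSet_Ioo (hint le_rfl (hsa.trans (hab.trans hb)))
    (hint (hs.trans hsa) hb),
    setIntegral_Ioo_const_sub_quantile hμ le_rfl hs (hsa.trans (hab.trans hb)),
    setIntegral_Ioo_const_sub_quantile hμ (hs.trans hsa) hab hb, integratedQuantile_zero]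
  ring

theorem integral_muU (hu : u ∈ Icc (0 : ℝ) 1) :
    ∫ x, x ∂muU μ u = integratedQuantile μ u := by
  rw [muU_eq_quantilePart hu, integral_quantilePart (Ioo_subset_Ioo_right hu.2) measurable_id',
    ← integral_Ioc_eq_integral_Ioo, ← intervalIntegral.integral_of_le hu.1]
  rfl

theorem setIntegral_const_sub_quantile_le_Ppot (hμ : Integrable (fun x : ℝ => x) μ)
    (hA : A ⊆ Ioo 0 1) (hBA : B ⊆ A) (k : ℝ) :
    ∫ τ in B, (k - quantile μ τ) ≤ Ppot (quantilePart μ A) k := by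
  have hmeas : Measurable fun x : ℝ => max (k - x) 0 := by fun_prop
  have hint : IntegrableOn (fun τ => max (k - quantile μ τ) 0) A :=
    integrableOn_comp_quantile hA hmeas (integrable_max_const_sub hμ k)
  have hint_sub : IntegrableOn (fun τ => k - quantile μ τ) B :=
    integrableOn_comp_quantile (hBA.trans hA) (measurable_const.sub measurable_id)
      ((integrable_const k).sub hμ)
  rw [Ppot, integral_quantilePart hA hmeas]
  calc ∫ τ in B, (k - quantile μ τ) ≤ ∫ τ in B, max (k - quantile μ τ) 0 :=
        integral_mono hint_sub (hint.mono_set hBA) fun _ => le_max_left _ _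
    _ ≤ ∫ τ in A, max (k - quantile μ τ) 0 :=
        setIntegral_mono_set hint (Eventually.of_forall fun _ => le_max_right _ _)
          hBA.eventuallyLE

theorem mul_sub_integratedQuantile_le_Ppot_muU (hμ : Integrable (fun x : ℝ => x) μ)
    (ht : t ∈ Icc 0 u) (hu : u ≤ 1) (k : ℝ) :
    t * k - integratedQuantile μ t ≤ Ppot (muU μ u) k := by
  have hle := setIntegral_const_sub_quantile_le_Ppot hμ (Ioo_subset_Ioo_right hu)
    (Ioo_subset_Ioo_right ht.2 : Ioo 0 t ⊆ Ioo 0 u) k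
  rwa [setIntegral_Ioo_const_sub_quantile hμ le_rfl ht.1 (ht.2.trans hu), integratedQuantile_zero,
    sub_zero, sub_zero, ← muU_eq_quantilePart ⟨ht.1.trans ht.2, hu⟩] at hle

theorem Ppot_muU_eq_mul_sub_integratedQuantile (hμ : Integrable (fun x : ℝ => x) μ)
    (ht : t ∈ Icc 0 u) (hu : u ≤ 1) {k : ℝ} (hbelow : ∀ τ ∈ Ioo 0 t, quantile μ τ ≤ k)
    (habove : ∀ τ ∈ Ioo t u, k ≤ quantile μ τ) :
    Ppot (muU μ u) k = t * k - integratedQuantile μ t := by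
  have hmeas : Measurable fun x : ℝ => max (k - x) 0 := by fun_prop
  have hdiff : ∀ᵐ τ, τ ∈ Ioo 0 u \ Ioo 0 t → max (k - quantile μ τ) 0 = 0 := by
    filter_upwards [Measure.ae_ne volume t] with τ hτt hτ
    have htτ : t ≤ τ := not_lt.1 fun h => hτ.2 ⟨hτ.1.1, h⟩
    exact max_eq_right (sub_nonpos.2 (habove τ ⟨htτ.lt_of_ne' hτt, hτ.1.2⟩))
  rw [Ppot, muU_eq_quantilePart ⟨ht.1.trans ht.2, hu⟩,
    integral_quantilePart (Ioo_subset_Ioo_right hu) hmeas,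
    setIntegral_eq_of_subset_of_ae_sdiff_eq_zero measurableSet_Ioo.nullMeasurableSet
      (Ioo_subset_Ioo_right ht.2) hdiff,
    setIntegral_congr_fun measurableSet_Ioo fun τ hτ => max_eq_left (sub_nonneg.2 (hbelow τ hτ)),
    setIntegral_Ioo_const_sub_quantile hμ le_rfl ht.1 (ht.2.trans hu), integratedQuantile_zero,
    sub_zero, sub_zero]

theorem exists_Ppot_muU_eq (hμ : Integrable (fun x : ℝ => x) μ) (hu : u ∈ Icc (0 : ℝ) 1) (k : ℝ) :
    ∃ t ∈ Icc 0 u, Ppot (muU μ u) k = t * k - integratedQuantile μ t := by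
  have ht : min u (cdf μ k) ∈ Icc 0 u := ⟨le_min hu.1 (cdf_nonneg μ k), min_le_left _ _⟩
  refine ⟨_, ht, Ppot_muU_eq_mul_sub_integratedQuantile hμ ht hu.2 (fun τ hτ => ?_)
    fun τ hτ => ?_⟩
  · exact (quantile_le_iff ⟨hτ.1, hτ.2.trans_le (ht.2.trans hu.2)⟩).2
      (hτ.2.le.trans (min_le_right _ _))
  · have hcdf : cdf μ k < τ := (min_lt_iff.1 hτ.1).resolve_left hτ.2.not_gt
    exact (not_le.1 fun h =>
      hcdf.not_ge ((quantile_le_iff ⟨ht.1.trans_lt hτ.1, hτ.2.trans_le hu.2⟩).1 h)).le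

theorem Ppot_quantile (hμ : Integrable (fun x : ℝ => x) μ) (ht : t ∈ Ioo (0 : ℝ) 1) :
    Ppot μ (quantile μ t) = t * quantile μ t - integratedQuantile μ t := by
  nth_rw 1 [← muU_one μ]
  exact Ppot_muU_eq_mul_sub_integratedQuantile hμ ⟨ht.1.le, ht.2.le⟩ le_rfl
    (fun τ hτ => monotoneOn_quantile ⟨hτ.1, hτ.2.trans ht.2⟩ ht hτ.2.le)
    fun τ hτ => monotoneOn_quantile ht ⟨ht.1.trans hτ.1, hτ.2⟩ hτ.1.le

end IntegratedQuantile

section DominatedMeasure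

variable {μ ν : Measure ℝ} [IsProbabilityMeasure μ] [IsProbabilityMeasure ν] {s t u : ℝ}

theorem integral_eq_integratedQuantile_one : ∫ x, x ∂ν = integratedQuantile ν 1 := by
  rw [← integral_muU (right_mem_Icc.2 zero_le_one), muU_one]

theorem integratedQuantile_le_of_Ppot_muU_le (hμ : Integrable (fun x : ℝ => x) μ)
    (hν : Integrable (fun x : ℝ => x) ν) (hu : u < 1) (hP : ∀ k, Ppot (muU μ u) k ≤ Ppot ν k)
    (ht : t ∈ Icc 0 u) : integratedQuantile ν t ≤ integratedQuantile μ t := by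
  obtain rfl | ht0 := ht.1.eq_or_lt
  · simp only [integratedQuantile_zero, le_refl]
  have hle := (mul_sub_integratedQuantile_le_Ppot_muU hμ ht hu.le _).trans (hP (quantile ν t))
  rw [Ppot_quantile hν ⟨ht0, ht.2.trans_lt hu⟩] at hle
  linarith

theorem integratedQuantile_sub_le_of_Cpot_muU_le (hμ : Integrable (fun x : ℝ => x) μ)
    (hν : Integrable (fun x : ℝ => x) ν) (hu : u < 1) (hC : ∀ k, Cpot (muU μ u) k ≤ Cpot ν k)
    (ht : t ∈ Icc 0 u) :
    integratedQuantile μ u - integratedQuantile μ t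
      ≤ integratedQuantile ν 1 - integratedQuantile ν (t + (1 - u)) := by
  obtain rfl | htu := ht.2.eq_or_lt
  · simp only [add_sub_cancel, sub_self, le_refl]
  have hu' : u ∈ Icc (0 : ℝ) 1 := ⟨ht.1.trans ht.2, hu.le⟩
  have hmuU : Integrable (fun x : ℝ => x) (muU μ u) := hμ.mono_measure (muU_le hu')
  have : IsFiniteMeasure (muU μ u) := isFiniteMeasure_of_le μ (muU_le hu')
  have hlevel : t + (1 - u) ∈ Ioo (0 : ℝ) 1 := ⟨by linarith [ht.1], by linarith⟩
  set k := quantile ν (t + (1 - u))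
  have hle := hC k
  have hPmu := mul_sub_integratedQuantile_le_Ppot_muU hμ ht hu.le k
  rw [Cpot_eq_Ppot_add hmuU, Cpot_eq_Ppot_add hν, Ppot_quantile hν hlevel, integral_muU hu',
    integral_eq_integratedQuantile_one, muU_real_univ hu', probReal_univ] at hle
  linarith

theorem exists_level_integratedQuantile_add_eq (hμ : Integrable (fun x : ℝ => x) μ)
    (hν : Integrable (fun x : ℝ => x) ν) (hu : u ∈ Ico (0 : ℝ) 1)
    (hP : ∀ k, Ppot (muU μ u) k ≤ Ppot ν k) (hC : ∀ k, Cpot (muU μ u) k ≤ Cpot ν k) :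
    ∃ s ∈ Icc 0 u, integratedQuantile ν s + integratedQuantile ν 1
      - integratedQuantile ν (s + (1 - u)) = integratedQuantile μ u := by
  have hcont : ContinuousOn (fun s => integratedQuantile ν s + integratedQuantile ν 1
      - integratedQuantile ν (s + (1 - u))) (Icc 0 u) := by
    have hQ := continuousOn_integratedQuantile hν
    refine ((hQ.mono (Icc_subset_Icc_right hu.2.le)).add continuousOn_const).sub
      (hQ.comp (by fun_prop) fun s hs => ⟨?_, ?_⟩)
    · linarith [hs.1, hu.2]
    · linarith [hs.2]
  refine intermediate_value_Icc' hu.1 hcont ⟨?_, ?_⟩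
  · simpa using integratedQuantile_le_of_Ppot_muU_le hμ hν hu.2 hP (right_mem_Icc.2 hu.1)
  · simpa [integratedQuantile_zero] using
      integratedQuantile_sub_le_of_Cpot_muU_le hμ hν hu.2 hC (left_mem_Icc.2 hu.1)

/-- The quantile levels in `(0, 1)` outside the window `[s, s + (1 - u)]` of length `1 - u`. For
`s ∈ [0, u]` they have total length `u`, and sliding `s` moves mass between the two tails. -/
def outerLevels (u s : ℝ) : Set ℝ :=
  Ioo 0 s ∪ Ioo (s + (1 - u)) 1

theorem outerLevels_subset (hu : u ≤ 1) (hs : s ∈ Icc 0 u) : outerLevels u s ⊆ Ioo 0 1 :=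
  union_subset (Ioo_subset_Ioo_right (hs.2.trans hu))
    (Ioo_subset_Ioo_left (add_nonneg hs.1 (sub_nonneg.2 hu)))

theorem volume_real_outerLevels (hu : u ≤ 1) (hs : s ∈ Icc 0 u) :
    volume.real (outerLevels u s) = u := by
  have hdisj : Disjoint (Ioo 0 s) (Ioo (s + (1 - u)) 1) :=
    disjoint_left.2 fun τ hτ hτ' => by linarith [hτ.2, hτ'.1]
  rw [outerLevels, measureReal_union hdisj measurableSet_Ioo measure_Ioo_lt_top.ne
    measure_Ioo_lt_top.ne, Real.volume_real_Ioo_of_le hs.1,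
    Real.volume_real_Ioo_of_le (by linarith [hs.2])]
  ring

theorem integral_quantilePart_outerLevels (hν : Integrable (fun x : ℝ => x) ν) (hu : u ≤ 1)
    (hs : s ∈ Icc 0 u) :
    ∫ x, x ∂quantilePart ν (outerLevels u s)
      = integratedQuantile ν s + integratedQuantile ν 1 - integratedQuantile ν (s + (1 - u)) := by
  have hneg := setIntegral_Ioo_union_Ioo_const_sub_quantile hν hs.1
    (a := s + (1 - u)) (by linarith) (by linarith [hs.2]) le_rfl 0
  simp only [zero_sub, mul_zero, integral_neg, neg_inj] at hneg
  rw [integral_quantilePart (outerLevels_subset hu hs) measurable_id', outerLevels, hneg]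

theorem Ppot_muU_le_Ppot_quantilePart_outerLevels (hμ : Integrable (fun x : ℝ => x) μ)
    (hν : Integrable (fun x : ℝ => x) ν) (hu : u < 1) (hP : ∀ k, Ppot (muU μ u) k ≤ Ppot ν k)
    (hC : ∀ k, Cpot (muU μ u) k ≤ Cpot ν k) (hs : s ∈ Icc 0 u)
    (hlevel : integratedQuantile ν s + integratedQuantile ν 1 - integratedQuantile ν (s + (1 - u))
      = integratedQuantile μ u) (k : ℝ) :
    Ppot (muU μ u) k ≤ Ppot (quantilePart ν (outerLevels u s)) k := by
  obtain ⟨t, ht, hPt⟩ := exists_Ppot_muU_eq hμ ⟨hs.1.trans hs.2, hu.le⟩ k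
  have hput {B : Set ℝ} (hB : B ⊆ outerLevels u s) :=
    setIntegral_const_sub_quantile_le_Ppot hν (outerLevels_subset hu.le hs) hB k
  rw [hPt]
  obtain hts | hst := le_total t s
  · have hQ := integratedQuantile_le_of_Ppot_muU_le hμ hν hu hP ht
    have hlower := hput ((Ioo_subset_Ioo_right hts).trans subset_union_left : Ioo 0 t ⊆ _)
    rw [setIntegral_Ioo_const_sub_quantile hν le_rfl ht.1 (ht.2.trans hu.le),
      integratedQuantile_zero] at hlower
    linarith
  · have hQ := integratedQuantile_sub_le_of_Cpot_muU_le hμ hν hu hC ht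
    have ht1 : t + (1 - u) ≤ 1 := by linarith [ht.2]
    have hlower := hput (union_subset_union_right _ (Ioo_subset_Ioo_right ht1) :
      Ioo 0 s ∪ Ioo (s + (1 - u)) (t + (1 - u)) ⊆ _)
    rw [setIntegral_Ioo_union_Ioo_const_sub_quantile hν hs.1 (by linarith) (by linarith) ht1]
      at hlower
    linarith

theorem exists_le_leCD_muU (hμ : Integrable (fun x : ℝ => x) μ)
    (hν : Integrable (fun x : ℝ => x) ν) (hu : u ∈ Ico (0 : ℝ) 1)
    (hP : ∀ k, Ppot (muU μ u) k ≤ Ppot ν k) (hC : ∀ k, Cpot (muU μ u) k ≤ Cpot ν k) :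
    ∃ χ ≤ ν, LeCD (muU μ u) χ ∧ ∫ x, x ∂χ = ∫ x, x ∂muU μ u := by
  obtain ⟨s, hs, hlevel⟩ := exists_level_integratedQuantile_add_eq hμ hν hu hP hC
  have hu' : u ∈ Icc (0 : ℝ) 1 := Ico_subset_Icc_self hu
  have hA := outerLevels_subset hu.2.le hs
  set χ := quantilePart ν (outerLevels u s)
  have hχ : χ ≤ ν := quantilePart_le hA
  have : IsFiniteMeasure χ := isFiniteMeasure_of_le ν hχ
  have : IsFiniteMeasure (muU μ u) := isFiniteMeasure_of_le μ (muU_le hu')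
  have hmass : (muU μ u).real univ = χ.real univ := by
    rw [muU_real_univ hu', quantilePart_real_univ hA, volume_real_outerLevels hu.2.le hs]
  have hmean : ∫ x, x ∂χ = ∫ x, x ∂muU μ u := by
    rw [integral_quantilePart_outerLevels hν hu.2.le hs, hlevel, integral_muU hu']
  exact ⟨χ, hχ, fun f hf _ => integral_convex_le_of_Ppot_le (hμ.mono_measure (muU_le hu'))
    (hν.mono_measure hχ) hmass hmean.symm
    (Ppot_muU_le_Ppot_quantilePart_outerLevels hμ hν hu.2 hP hC hs hlevel) hf, hmean⟩

end DominatedMeasure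

theorem IsShadow.Cpot_muU_le {μ ν S : Measure ℝ} [IsProbabilityMeasure μ] [IsProbabilityMeasure ν]
    (hμ : Integrable (fun x : ℝ => x) μ) (hν : Integrable (fun x : ℝ => x) ν) {u : ℝ}
    (hu : u ∈ Ico (0 : ℝ) 1) (hC : ∀ k, Cpot (muU μ u) k ≤ Cpot ν k)
    (hS : IsShadow (muU μ u) ν S) (k : ℝ) : Cpot (muU μ u) k ≤ Cpot S k := by
  obtain ⟨⟨_, hS_int⟩, hmuU_S, hSν, hS_min⟩ := hS
  have hmuU : muU μ u ≤ μ := muU_le (Ico_subset_Icc_self hu)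
  have : IsFiniteMeasure (muU μ u) := isFiniteMeasure_of_le μ hmuU
  have hmuU_int := hμ.mono_measure hmuU
  have hP (k : ℝ) : Ppot (muU μ u) k ≤ Ppot S k := hmuU_S.Ppot_le hmuU_int hS_int k
  obtain ⟨χ, hχν, hmuU_χ, hmean_χ⟩ := exists_le_leCD_muU hμ hν hu
    (fun k => (hP k).trans (Ppot_mono_measure hν (Measure.le_iff.2 hSν) k)) hC
  have hχ : MemM χ := ⟨isFiniteMeasure_of_le ν hχν, hν.mono_measure hχν⟩
  have hmean : ∫ x, x ∂muU μ u ≤ ∫ x, x ∂S :=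
    hmean_χ ▸ (hS_min χ hχ hmuU_χ (Measure.le_iff.1 hχν)).integral_le hS_int hχ.2
  rw [Cpot_eq_Ppot_add hmuU_int, Cpot_eq_Ppot_add hS_int, hmuU_S.measureReal_univ_eq]
  linarith [hP k]

section DominatedLevels

variable {μ ν : Measure ℝ} {u v : ℝ}

/-- The levels `u ∈ (0, 1)` at which the call potential of the lift `μ_u` stays below that of `ν`,
that is, at which `c(u) = 0`; their supremum is `u*`. -/
def dominatedLevels (μ ν : Measure ℝ) : Set ℝ :=
  {u | u ∈ Ioo (0 : ℝ) 1 ∧ ∀ k, Cpot (muU μ u) k ≤ Cpot ν k}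

theorem sSup_dominatedLevels_nonneg (μ ν : Measure ℝ) : 0 ≤ sSup (dominatedLevels μ ν) :=
  Real.sSup_nonneg fun _ hu => hu.1.1.le

theorem bddAbove_dominatedLevels (μ ν : Measure ℝ) : BddAbove (dominatedLevels μ ν) :=
  ⟨1, fun _ hu => hu.1.2.le⟩

theorem exists_Cpot_lt_Cpot_muU (hv : v ∈ Ioo (sSup (dominatedLevels μ ν)) 1) :
    ∃ k, Cpot ν k < Cpot (muU μ v) k := by
  by_contra! hle
  have hv0 : 0 < v := (sSup_dominatedLevels_nonneg μ ν).trans_lt hv.1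
  exact hv.1.not_ge (le_csSup (bddAbove_dominatedLevels μ ν) ⟨⟨hv0, hv.2⟩, hle⟩)

variable [IsProbabilityMeasure μ]

theorem dominatedLevels_eq_setOf_iSup_eq_zero [IsProbabilityMeasure ν]
    (hμ : Integrable (fun x : ℝ => x) μ) (hν : Integrable (fun x : ℝ => x) ν) :
    dominatedLevels μ ν
      = {u | u ∈ Ioo (0 : ℝ) 1 ∧ ⨆ k, (Cpot (muU μ u) k - Cpot ν k) = 0} := by
  ext u
  refine and_congr_right fun hu => ?_
  have hu' : u ∈ Icc (0 : ℝ) 1 := Ioo_subset_Icc_self hu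
  have : IsFiniteMeasure (muU μ u) := isFiniteMeasure_of_le μ (muU_le hu')
  exact (iSup_Cpot_sub_eq_zero_iff (hμ.mono_measure (muU_le hu')) hν
    (by rw [muU_real_univ hu', probReal_univ]; exact hu.2.le)).symm

theorem Cpot_muU_eq_intervalIntegral (hu : u ∈ Icc (0 : ℝ) 1) (k : ℝ) :
    Cpot (muU μ u) k = ∫ t in (0 : ℝ)..u, max (quantile μ t - k) 0 := by
  rw [Cpot, muU_eq_quantilePart hu, integral_quantilePart (Ioo_subset_Ioo_right hu.2) (by fun_prop),
    ← integral_Ioc_eq_integral_Ioo, ← intervalIntegral.integral_of_le hu.1]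

theorem integrableOn_max_quantile_sub (hμ : Integrable (fun x : ℝ => x) μ) (k : ℝ) :
    IntegrableOn (fun t => max (quantile μ t - k) 0) (Icc 0 1) :=
  (integrableOn_Icc_iff_integrableOn_Ioo).2 (integrableOn_comp_quantile Subset.rfl
    (f := fun x => max (x - k) 0) (by fun_prop) (integrable_max_sub_const hμ k))

theorem continuousOn_Cpot_muU (hμ : Integrable (fun x : ℝ => x) μ) (k : ℝ) :
    ContinuousOn (fun u => Cpot (muU μ u) k) (Icc 0 1) := by
  have hint := integrableOn_max_quantile_sub hμ k
  rw [← uIcc_of_le (zero_le_one' ℝ)] at hint ⊢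
  refine (intervalIntegral.continuousOn_primitive_interval hint).congr fun u hu => ?_
  rw [uIcc_of_le zero_le_one] at hu
  exact Cpot_muU_eq_intervalIntegral hu k

theorem Cpot_muU_le_add (hμ : Integrable (fun x : ℝ => x) μ) (hu : 0 ≤ u) (huv : u ≤ v)
    (hv : v < 1) {y : ℝ} (hy : quantile μ v ≤ y) (k : ℝ) :
    Cpot (muU μ v) k ≤ Cpot (muU μ u) k + (v - u) * max (y - k) 0 := by
  have hint {a b : ℝ} (ha : 0 ≤ a) (hab : a ≤ b) (hb : b ≤ 1) :
      IntervalIntegrable (fun t => max (quantile μ t - k) 0) volume a b :=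
    (intervalIntegrable_iff_integrableOn_Icc_of_le hab).2
      ((integrableOn_max_quantile_sub hμ k).mono_set (Icc_subset_Icc ha hb))
  rw [Cpot_muU_eq_intervalIntegral ⟨hu.trans huv, hv.le⟩,
    Cpot_muU_eq_intervalIntegral ⟨hu, huv.trans hv.le⟩,
    ← intervalIntegral.integral_add_adjacent_intervals (hint le_rfl hu (huv.trans hv.le))
      (hint hu huv hv.le), ← smul_eq_mul, ← intervalIntegral.integral_const]
  gcongr
  refine intervalIntegral.integral_mono_on_of_le_Ioo huv (hint hu huv hv.le)
    intervalIntegrable_const fun t ht => ?_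
  have hty : quantile μ t ≤ y := (monotoneOn_quantile ⟨hu.trans_lt ht.1, ht.2.trans hv⟩
    ⟨hu.trans_lt (ht.1.trans ht.2), hv⟩ ht.2.le).trans hy
  gcongr

theorem Cpot_muU_sSup_dominatedLevels_le (hμ : Integrable (fun x : ℝ => x) μ) (k : ℝ) :
    Cpot (muU μ (sSup (dominatedLevels μ ν))) k ≤ Cpot ν k := by
  obtain hempty | hne := (dominatedLevels μ ν).eq_empty_or_nonempty
  · rw [hempty, Real.sSup_empty, muU, if_pos le_rfl, Cpot, integral_zero_measure]
    exact Cpot_nonneg ν k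
  have hclosed : IsClosed {u ∈ Icc (0 : ℝ) 1 | Cpot (muU μ u) k ≤ Cpot ν k} :=
    (continuousOn_Cpot_muU hμ k).preimage_isClosed_of_isClosed isClosed_Icc isClosed_Iic
  have hsub : dominatedLevels μ ν ⊆ {u ∈ Icc (0 : ℝ) 1 | Cpot (muU μ u) k ≤ Cpot ν k} :=
    fun u hu => ⟨Ioo_subset_Icc_self hu.1, hu.2 k⟩
  exact (closure_minimal hsub hclosed (csSup_mem_closure hne (bddAbove_dominatedLevels μ ν))).2

end DominatedLevels

section Separation

open ProbabilityTheory

variable {μ ν μ' ν' S : Measure ℝ} [IsProbabilityMeasure μ] {u : ℝ}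

theorem lt_cdf_of_measure_Iic_ne_zero (hu : u ∈ Icc (0 : ℝ) 1) (hμsum : muU μ u + μ' = μ) {y : ℝ}
    (hy : μ' (Iic y) ≠ 0) : u < cdf μ y := by
  have : IsFiniteMeasure (muU μ u) := isFiniteMeasure_of_le μ (muU_le hu)
  have : IsFiniteMeasure μ' := isFiniteMeasure_of_le μ (hμsum ▸ Measure.le_add_left le_rfl)
  have hcdf : cdf μ y = min u (cdf μ y) + μ'.real (Iic y) := by
    rw [← muU_real_Iic hu, ← measureReal_add_apply, hμsum, cdf_eq_real]
  have hpos : 0 < μ'.real (Iic y) := measureReal_nonneg.lt_of_ne' ((measureReal_ne_zero_iff).2 hy)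
  exact (min_lt_iff.1 (by linarith)).resolve_right (lt_irrefl _)

theorem measure_Ici_eq_zero_of_measure_Iic_ne_zero [IsProbabilityMeasure ν]
    (hμ : Integrable (fun x : ℝ => x) μ) (hν : Integrable (fun x : ℝ => x) ν)
    (hu : u ∈ Ico (0 : ℝ) 1) (hC : ∀ k, Cpot (muU μ u) k ≤ Cpot ν k)
    (hmax : ∀ v ∈ Ioo u 1, ∃ k, Cpot ν k < Cpot (muU μ v) k) (hS : IsShadow (muU μ u) ν S)
    (hμsum : muU μ u + μ' = μ) (hνsum : S + ν' = ν) {y : ℝ} (hy : μ' (Iic y) ≠ 0) :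
    ν' (Ici y) = 0 := by
  have hν'_le : ν' ≤ ν := hνsum ▸ Measure.le_add_left le_rfl
  have : IsFiniteMeasure ν' := isFiniteMeasure_of_le ν hν'_le
  have : IsFiniteMeasure S := hS.1.1
  by_contra hne
  have hpos : 0 < ν'.real (Ici y) := measureReal_nonneg.lt_of_ne' ((measureReal_ne_zero_iff).2 hne)
  obtain ⟨v, huv, hv⟩ := exists_between (lt_min
    (lt_cdf_of_measure_Iic_ne_zero (Ico_subset_Icc_self hu) hμsum hy) (lt_add_of_pos_right u hpos))
  obtain ⟨hv_cdf, hv_add⟩ := lt_min_iff.1 hv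
  have hv1 : v < 1 := hv_cdf.trans_le (cdf_le_one μ y)
  have hvy : quantile μ v ≤ y := (quantile_le_iff ⟨hu.1.trans_lt huv, hv1⟩).2 hv_cdf.le
  obtain ⟨k, hk⟩ := hmax v ⟨huv, hv1⟩
  refine hk.not_ge ?_
  calc Cpot (muU μ v) k ≤ Cpot (muU μ u) k + (v - u) * max (y - k) 0 :=
        Cpot_muU_le_add hμ hu.1 huv.le hv1 hvy k
    _ ≤ Cpot S k + ν'.real (Ici y) * max (y - k) 0 := by
        gcongr
        · exact hS.Cpot_muU_le hμ hν hu hC k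
        · linarith
    _ ≤ Cpot S k + Cpot ν' k := by
        gcongr
        exact measureReal_Ici_mul_le_Cpot (hν.mono_measure hν'_le) y k
    _ = Cpot ν k := by rw [← Cpot_add_measure hS.1.2 (hν.mono_measure hν'_le), hνsum]

theorem ne_zero_of_add_eq_of_measureReal_univ_lt_one {η : Measure ℝ} (hsum : η + μ' = μ)
    (hη : η.real univ < 1) : μ' ≠ 0 := by
  rintro rfl
  rw [← add_zero η, hsum, probReal_univ] at hη
  exact hη.false

end Separation

theorem msupport_eq_support (η : Measure ℝ) : msupport η = η.support := by
  ext x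
  simp only [msupport, mem_ofPred_eq, Measure.mem_support_iff_forall, pos_iff_ne_zero]

theorem separated_at_sInf_msupport {η χ : Measure ℝ} (hη : η ≠ 0) (hχ : χ ≠ 0)
    (hsep : ∀ y, η (Iic y) ≠ 0 → χ (Ici y) = 0) :
    (msupport η).Nonempty ∧ BddBelow (msupport η) ∧ χ (Ioi (sInf (msupport η))) = 0 ∧
      (η {sInf (msupport η)} = 0 ∨ χ {sInf (msupport η)} = 0) := by
  rw [msupport_eq_support]
  have hne : η.support.Nonempty := Measure.nonempty_support hη
  have hleft : ∀ z ∈ χ.support, ∀ x ∈ η.support, z ≤ x := by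
    intro z hz x hx
    by_contra! hxz
    obtain ⟨y, hxy, hyz⟩ := exists_between hxz
    have hη_pos := (Measure.mem_support_iff_forall x).1 hx _ (Iic_mem_nhds hxy)
    have hχ_pos := (Measure.mem_support_iff_forall z).1 hz _ (Ici_mem_nhds hyz)
    exact hχ_pos.ne' (hsep y hη_pos.ne')
  have hIoi : Ioi (sInf η.support) ⊆ χ.supportᶜ := fun z hz hzχ =>
    (le_csInf hne (hleft z hzχ)).not_gt hz
  refine ⟨hne, (Measure.nonempty_support hχ).imp hleft,
    measure_mono_null hIoi Measure.measure_compl_support, or_iff_not_imp_left.2 fun hatom => ?_⟩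
  have hIic : η (Iic (sInf η.support)) ≠ 0 := fun h =>
    hatom (measure_mono_null (singleton_subset_iff.2 self_mem_Iic) h)
  exact measure_mono_null (singleton_subset_iff.2 self_mem_Ici) (hsep _ hIic)

theorem support_separation_at_uStar_general
    (μ ν : Measure ℝ) [IsProbabilityMeasure μ] [IsProbabilityMeasure ν]
    (hμ : Integrable (fun x : ℝ => x) μ) (hν : Integrable (fun x : ℝ => x) ν)
    (uStar : ℝ) (huStar : uStar
      = sSup {u : ℝ | u ∈ Ioo (0 : ℝ) 1 ∧ ⨆ k : ℝ, (Cpot (muU μ u) k - Cpot ν k) = 0})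
    (hlt : uStar < 1)
    (SStar : Measure ℝ) (hSStar : IsShadow (muU μ uStar) ν SStar)
    (μ' : Measure ℝ) (hμsum : muU μ uStar + μ' = μ)
    (ν' : Measure ℝ) (hνsum : SStar + ν' = ν) :
    (msupport μ').Nonempty ∧ BddBelow (msupport μ') ∧
    ν' (Ioi (sInf (msupport μ'))) = 0 ∧
    (μ' {sInf (msupport μ')} = 0 ∨ ν' {sInf (msupport μ')} = 0) := by
  rw [← dominatedLevels_eq_setOf_iSup_eq_zero hμ hν] at huStar
  have hu : uStar ∈ Ico (0 : ℝ) 1 := ⟨huStar ▸ sSup_dominatedLevels_nonneg μ ν, hlt⟩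
  have hmass : (muU μ uStar).real univ < 1 :=
    (muU_real_univ (Ico_subset_Icc_self hu)).trans_lt hlt
  have hμ' : μ' ≠ 0 := ne_zero_of_add_eq_of_measureReal_univ_lt_one hμsum hmass
  have hν' : ν' ≠ 0 := by
    have := isFiniteMeasure_of_le μ (muU_le (Ico_subset_Icc_self hu))
    have := hSStar.1.1
    exact ne_zero_of_add_eq_of_measureReal_univ_lt_one hνsum
      (hSStar.2.1.measureReal_univ_eq ▸ hmass)
  refine separated_at_sInf_msupport hμ' hν' fun y =>
    measure_Ici_eq_zero_of_measure_Iic_ne_zero hμ hν hu ?_ ?_ hSStar hμsum hνsum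
  · exact huStar ▸ Cpot_muU_sSup_dominatedLevels_le hμ
  · exact huStar ▸ fun v => exists_Cpot_lt_Cpot_muU

/-- Proposition 4.4: if `u* < 1`, the support of `μ - μ_{u*}` lies strictly to
the right of the support of `ν - S^ν(μ_{u*})`. -/
theorem support_separation_at_uStar
    (μ ν : MeasureTheory.Measure ℝ)
    [MeasureTheory.IsProbabilityMeasure μ] [MeasureTheory.IsProbabilityMeasure ν]
    (hμ : MeasureTheory.Integrable (fun x : ℝ => x) μ)
    (hν : MeasureTheory.Integrable (fun x : ℝ => x) ν)
    (hcd : LeCD μ ν)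
    (c : ℝ → ℝ)
    (hc0 : c 0 = 0)
    (hcu : ∀ u ∈ Set.Ioo (0:ℝ) 1, c u = ⨆ k : ℝ, (Cpot (muU μ u) k - Cpot ν k))
    (uStar : ℝ) (huStar : uStar = sSup {u : ℝ | u ∈ Set.Ioo (0:ℝ) 1 ∧ c u = 0})
    (hlt : uStar < 1)
    (SStar : MeasureTheory.Measure ℝ) (hSStar : IsShadow (muU μ uStar) ν SStar)
    (μ' : MeasureTheory.Measure ℝ) (hμ' : MemM μ') (hμsum : muU μ uStar + μ' = μ)
    (ν' : MeasureTheory.Measure ℝ) (hν' : MemM ν') (hνsum : SStar + ν' = ν) :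
    (msupport μ').Nonempty ∧ BddBelow (msupport μ') ∧
    ν' (Set.Ioi (sInf (msupport μ'))) = 0 ∧
    (μ' {sInf (msupport μ')} = 0 ∨ ν' {sInf (msupport μ')} = 0) :=
  support_separation_at_uStar_general μ ν hμ hν uStar
    (huStar.trans (congrArg sSup (Set.ext fun u => and_congr_right fun hu => by rw [hcu u hu])))
    hlt SStar hSStar μ' hμsum ν' hνsum
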